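/- There exists a (7, 2517, K)-snake, i.e., a cyclic sequence of 2517 distinct permutations of S_7, each obtained from the previous by a push-to-the-top operation on an odd index, with all permutations even; 2517 = 7!/2 - 3. -/

import Mathlib

def adjTranspositions (n : ℕ) : Set (Equiv.Perm (Fin n)) :=
  {s | ∃ i j : Fin n, (j : ℕ) = (i : ℕ) + 1 ∧ s = Equiv.swap i j}

/-- Kendall's τ-distance on `S_n`. -/
noncomputable def kendall {n : ℕ} (σ π : Equiv.Perm (Fin n)) : ℕ :=
  sInf {k | ∃ l : List (Equiv.Perm (Fin n)), l.length = k ∧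
    (∀ s ∈ l, s ∈ adjTranspositions n) ∧ σ * l.prod = π}

/-- Push-to-the-top operation `t_{i+1}` (1-indexed). -/
def pushToTop {n : ℕ} (i : Fin n) (π : Equiv.Perm (Fin n)) : Equiv.Perm (Fin n) :=
  π * (Fin.cycleRange i)⁻¹

/-- The moves of the snake, packed in base 4: digit d at place k means push index 2 d + 3. -/
def snakeWord : ℕ :=
  9220675415905363103706692568753101970801172174652129148069664133690611565572240659524379875648155407794835024119440184294882971602111853469490213362695498560816579817123606538933810863272192900415236211803656256453776625276794646270709467448084825975486512086311249109836530660666126892582737880951939336192559956580731125476851713103691839092498027533917930126130325506119525885063253454597304894449851406673308004630586480862833032215085855249466337512869202222411395327011914907975799525287342600117661450959145011560497553445173147402316327531452332677151380734774358697710265694393100818352156225989950109874498543079993409639921043224480848483369477897043353196366004014756522214161889023622265339109491119552558236136692440488226178302093597033631401131003166407447470728986881717598853805346368274859951197649906427943534795693083981765689073381885582949545884143956189431076905107071356191441353656986365219517149592678194297146797118003213538493441572813800658234281880747107861070707858150933463761357465975229588269547142205596325662694352633347646312175803749724453827501294060627637433490815396897538163384117303456192671193583870154820410345196895741192550410344019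52656525253726054234494961131666698245178347033656034520009071326641645833168549371608227942243266529638707116778462812796840942694908792823872871764026027902330473370084047484049378305464091556976393291094240438673488665935698210531989154817482029836133102120764795294042841358593056780445958750411879095490257277090752301512446794137

/-- The `k`-th digit of the move word. -/
def snakeDigit (k : ℕ) : ℕ := (snakeWord / 4 ^ k) % 4

/-- Position to be pushed (0-indexed). -/
def snakeIdx : ℕ → Fin 7
  | 0 => 2
  | 1 => 4
  | _ => 6

/-- The corresponding step on codes (base 8 encodings of permutations). -/
def codeStep : ℕ → ℕ → ℕ
  | 0, s => s / 64 % 8 + (s % 64) * 8 + s / 512 * 512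
  | 1, s => s / 4096 % 8 + (s % 4096) * 8 + s / 32768 * 32768
  | _, s => s / 262144 % 8 + (s % 262144) * 8 + s / 2097152 * 2097152

def permCode (π : Equiv.Perm (Fin 7)) : ℕ :=
  (π 0 : ℕ) + 8 * (π 1 : ℕ) + 64 * (π 2 : ℕ) + 512 * (π 3 : ℕ) + 4096 * (π 4 : ℕ)
    + 32768 * (π 5 : ℕ) + 262144 * (π 6 : ℕ)

def snakePerm : ℕ → Equiv.Perm (Fin 7)
  | 0 => 1
  | k + 1 => pushToTop (snakeIdx (snakeDigit k)) (snakePerm k)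

/-- Forces evaluation of a numeral. -/
def forceNat (x : ℕ) (f : ℕ → Bool) : Bool :=
  match x with
  | 0 => f 0
  | y + 1 => f (y + 1)

theorem forceNat_eq (x : ℕ) (f : ℕ → Bool) : forceNat x f = f x := by
  cases x <;> rfl

/-- Runs through the codes, checking that there is no repetition modulo 32768, and that we
come back to the start. -/
def runCheck : ℕ → ℕ → ℕ → ℕ → Bool
  | 0, _, s, _ => Nat.beq s 1754760
  | n + 1, w, s, m =>
    bif Nat.beq ((m / 2 ^ (s % 32768)) % 2) 0 then
      forceNat (w / 4) fun w' =>
      forceNat (codeStep (w % 4) s) fun s' =>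
      forceNat (Nat.lor m (2 ^ (s % 32768))) fun m' => runCheck n w' s' m'
    else false

theorem runCheck_ok : runCheck 2517 snakeWord 1754760 0 = true := by
  decide +kernel

theorem permCode_inj : Function.Injective permCode := by
  intro a b h
  unfold permCode at h
  ext i
  have ha := fun i => (a i).isLt
  have hb := fun i => (b i).isLt
  have ha0 := ha 0
  have ha1 := ha 1
  have ha2 := ha 2
  have ha3 := ha 3
  have ha4 := ha 4
  have ha5 := ha 5
  have ha6 := ha 6
  have hb0 := hb 0
  have hb1 := hb 1
  have hb2 := hb 2
  have hb3 := hb 3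
  have hb4 := hb 4
  have hb5 := hb 5
  have hb6 := hb 6
  fin_cases i <;> simp only [Fin.zero_eta, Fin.mk_one, Fin.reduceFinMk] <;> omega

theorem permCode_push (d : ℕ) (π : Equiv.Perm (Fin 7)) :
    permCode (pushToTop (snakeIdx d) π) = codeStep d (permCode π) := by
  have ha := fun i => (π i).isLt
  have ha0 := ha 0
  have ha1 := ha 1
  have ha2 := ha 2
  have ha3 := ha 3
  have ha4 := ha 4
  have ha5 := ha 5
  have ha6 := ha 6
  have key : ∀ i j k : Fin 7, Fin.cycleRange i k = j →
      pushToTop i π j = π k := by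
    intro i j k h
    simp [pushToTop, ← h]
  match d with
  | 0 =>
    simp only [snakeIdx, permCode, codeStep]
    rw [key 2 0 2 (by decide), key 2 1 0 (by decide), key 2 2 1 (by decide),
      key 2 3 3 (by decide), key 2 4 4 (by decide), key 2 5 5 (by decide), key 2 6 6 (by decide)]
    omega
  | 1 =>
    simp only [snakeIdx, permCode, codeStep]
    rw [key 4 0 4 (by decide), key 4 1 0 (by decide), key 4 2 1 (by decide),
      key 4 3 2 (by decide), key 4 4 3 (by decide), key 4 5 5 (by decide), key 4 6 6 (by decide)]
    omega
  | d + 2 =>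
    simp only [snakeIdx, permCode, codeStep]
    rw [key 6 0 6 (by decide), key 6 1 0 (by decide), key 6 2 1 (by decide),
      key 6 3 2 (by decide), key 6 4 3 (by decide), key 6 5 4 (by decide), key 6 6 5 (by decide)]
    omega

theorem testBit_eq (m e : ℕ) : m.testBit e = decide (m / 2 ^ e % 2 = 1) :=
  Nat.testBit_eq_decide_div_mod_eq

theorem runCheck_spec (n : ℕ) : ∀ (k m : ℕ),
    runCheck n (snakeWord / 4 ^ k) (permCode (snakePerm k)) m = true →
    (∀ j < n, m.testBit (permCode (snakePerm (k + j)) % 32768) = false) ∧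
    (∀ j < n, ∀ i < j, permCode (snakePerm (k + i)) ≠ permCode (snakePerm (k + j))) ∧
    permCode (snakePerm (k + n)) = 1754760 := by
  induction n with
  | zero =>
    intro k m h
    refine ⟨by simp, by simp, ?_⟩
    exact Nat.eq_of_beq_eq_true h
  | succ n ih =>
    intro k m h
    rw [runCheck] at h
    cases hb : Nat.beq ((m / 2 ^ (permCode (snakePerm k) % 32768)) % 2) 0 with
    | false => rw [hb] at h; simp at h
    | true =>
      rw [hb] at h
      simp only [cond_true, forceNat_eq] at h
      have hb' := Nat.eq_of_beq_eq_true hb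
      have e1 : snakeWord / 4 ^ k / 4 = snakeWord / 4 ^ (k + 1) := by
        rw [Nat.div_div_eq_div_mul, pow_succ]
      have e2 : codeStep (snakeWord / 4 ^ k % 4) (permCode (snakePerm k))
          = permCode (snakePerm (k + 1)) := (permCode_push _ _).symm
      rw [e1, e2] at h
      change runCheck n _ _ (m ||| 2 ^ (permCode (snakePerm k) % 32768)) = true at h
      obtain ⟨h1, h2, h3⟩ := ih (k + 1) _ h
      simp only [Nat.testBit_or, Bool.or_eq_false_iff] at h1
      have sh : ∀ j, k + (j + 1) = k + 1 + j := fun j => by omega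
      refine ⟨?_, ?_, ?_⟩
      · intro j hj
        cases j with
        | zero => rw [testBit_eq, add_zero, hb']; rfl
        | succ j => rw [sh]; exact (h1 j (by omega)).1
      · intro j hj i hi
        cases j with
        | zero => omega
        | succ j =>
          cases i with
          | zero =>
            intro he
            have := (h1 j (by omega)).2
            rw [← sh, ← he, add_zero, Nat.testBit_two_pow_self] at this
            cases this
          | succ i =>
            rw [sh i, sh j]
            exact h2 j (by omega) i (by omega)
      · rw [sh]; exact h3

theorem permCode_one : permCode 1 = 1754760 := by decide

theorem snake_facts :
    (∀ j < 2517, ∀ i < j, snakePerm i ≠ snakePerm j) ∧ snakePerm 2517 = 1 := by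
  have h := runCheck_spec 2517 0 0 (by
    rw [pow_zero, Nat.div_one, snakePerm, permCode_one]; exact runCheck_ok)
  simp only [zero_add] at h
  refine ⟨fun j hj i hi he => h.2.1 j hj i hi (by rw [he]), ?_⟩
  apply permCode_inj
  rw [h.2.2, permCode_one]

theorem snakeIdx_even (d : ℕ) : Even (snakeIdx d : ℕ) := by
  match d with
  | 0 => exact ⟨1, rfl⟩
  | 1 => exact ⟨2, rfl⟩
  | d + 2 => exact ⟨3, rfl⟩

theorem snakePerm_sign (k : ℕ) : Equiv.Perm.sign (snakePerm k) = 1 := by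
  induction k with
  | zero => simp [snakePerm]
  | succ k ih =>
    rw [snakePerm, pushToTop, Equiv.Perm.sign_mul, ih, Equiv.Perm.sign_inv,
      Fin.sign_cycleRange, (snakeIdx_even _).neg_one_pow, one_mul]

theorem two_le_kendall (σ π : Equiv.Perm (Fin 7)) (hσ : Equiv.Perm.sign σ = 1)
    (hπ : Equiv.Perm.sign π = 1) (hne : σ ≠ π) : 2 ≤ kendall σ π := by
  unfold kendall
  apply le_csInf
  · have hm : σ⁻¹ * π ∈ Submonoid.closure
        (Set.range fun i : Fin 6 => Equiv.swap i.castSucc i.succ) := by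
      rw [Equiv.Perm.mclosure_swap_castSucc_succ]; trivial
    obtain ⟨l, hl, hp⟩ := Submonoid.exists_list_of_mem_closure hm
    refine ⟨l.length, l, rfl, ?_, ?_⟩
    · intro s hs
      obtain ⟨i, rfl⟩ := hl s hs
      exact ⟨i.castSucc, i.succ, by simp, rfl⟩
    · rw [hp]; group
  · rintro k ⟨l, rfl, hl, hp⟩
    match l with
    | [] => exact absurd (by simpa using hp) hne
    | [s] =>
      exfalso
      obtain ⟨i, j, hij, rfl⟩ := hl s (by simp)
      have hij' : i ≠ j := by rintro rfl; omega
      rw [← hp] at hπ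
      simp [hσ, Equiv.Perm.sign_swap hij'] at hπ
    | a :: b :: l => simp

/-- There exists a `(7,2517,K)`-snake: a cyclic sequence of `2517 = 7!/2 - 3` distinct even
permutations of `S_7`, consecutive ones (cyclically) differing by a push-to-the-top
operation on an odd index (even 0-indexed position), with pairwise Kendall's τ-distance at
least 2. -/
theorem stmt_19 :
    2517 = Nat.factorial 7 / 2 - 3 ∧
    ∃ c : Fin 2517 → Equiv.Perm (Fin 7),
      Function.Injective c ∧
      (∀ k : Fin 2517, ∃ i : Fin 7, Even (i : ℕ) ∧ c (k + 1) = pushToTop i (c k)) ∧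
      (∀ k : Fin 2517, Equiv.Perm.sign (c k) = 1) ∧
      (∀ k l : Fin 2517, k ≠ l → 2 ≤ kendall (c k) (c l)) := by
  obtain ⟨hd, hc⟩ := snake_facts
  have hinj : Function.Injective (fun k : Fin 2517 => snakePerm k) := by
    intro a b h
    rcases lt_trichotomy (a : ℕ) (b : ℕ) with hlt | heq | hlt
    · exact absurd h (hd b b.isLt a hlt)
    · exact Fin.ext heq
    · exact absurd h.symm (hd a a.isLt b hlt)
  refine ⟨by decide, fun k => snakePerm k, hinj, ?_, fun k => snakePerm_sign k, ?_⟩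
  · intro k
    refine ⟨snakeIdx (snakeDigit k), snakeIdx_even _, ?_⟩
    have hstep : snakePerm ((k : ℕ) + 1) = pushToTop (snakeIdx (snakeDigit k)) (snakePerm k) := rfl
    have hv : ((k + 1 : Fin 2517) : ℕ) = ((k : ℕ) + 1) % 2517 := Fin.val_add k 1
    show snakePerm ((k + 1 : Fin 2517) : ℕ) = _
    rw [hv]
    by_cases hk : (k : ℕ) + 1 = 2517
    · rw [← hstep, hk, hc]; rfl
    · rw [Nat.mod_eq_of_lt (by omega), hstep]
  · intro k l hkl
    exact two_le_kendall _ _ (snakePerm_sign _) (snakePerm_sign _) (fun h => hkl (hinj h))
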